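/- For every integer α ≥ 1, the Laurent series in the d_5 tower satisfy L_{2α−1} = q^2 · (J_7^{16}/J_14^5) · ∑_{n≥0} d_5(7^{2α−1}·n + λ_{2α−1})·q^n and L_{2α} = q · (J_1^{16}/J_2^5) · ∑_{n≥0} d_5(7^{2α}·n + λ_{2α})·q^n, where λ_β = (1 + 7^β)/4 if β is odd and λ_β = (1 + 3·7^β)/4 if β is even. -/

import Mathlib

noncomputable section

/-- `J b = ∏_{k=1}^∞ (1 - q^{b·k})` as a formal power series with integer coefficients. -/
def J (b : ℕ) : PowerSeries ℤ :=
  PowerSeries.mk fun n =>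
    PowerSeries.coeff n
      (∏ k ∈ Finset.range (n + 1), (1 - (PowerSeries.X : PowerSeries ℤ) ^ (b * (k + 1))))

/-- `λ_β = (1 + 7^β)/4` if `β` is odd, `λ_β = (1 + 3·7^β)/4` if `β` is even
(both divisions are exact). -/
def lam (β : ℕ) : ℕ := if β % 2 = 1 then (1 + 7 ^ β) / 4 else (1 + 3 * 7 ^ β) / 4

/-!
Write `D = ∑ d₅(n) qⁿ = J₂⁵ / J₁¹⁶`, so that `A₅ = q¹² D(q) / D(q⁴⁹)`. Since
`U₇(f(q) · g(q⁷)) = U₇(f) · g(q)`, the factor `D(q⁴⁹)` passes through `U₇` twice, and the tower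
becomes a recursion without `A₅`: if `L_{2β} · D = T`, then `L_{2β+1} · D(q⁷) = U₇(q¹² T)` and
`L_{2β+2} · D = U₇(U₇(q¹² T))`. Starting from `T = D`, every `T` is a power of `q` times the
generating function of `d₅` along an arithmetic progression, and the offsets of these progressions
satisfy the recursion of `λ_β`.
-/

open PowerSeries LaurentSeries

section Decimation

variable {R : Type*} {m : ℕ}

section Semiring

variable [Semiring R] {U : R⸨X⸩ → R⸨X⸩}

/-- `U` is the operator `U_m : ∑ f(n) qⁿ ↦ ∑ f(mn) qⁿ` on Laurent series, characterised by its
coefficients rather than constructed. -/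
def IsDecimation (m : ℕ) (U : R⸨X⸩ → R⸨X⸩) : Prop :=
  ∀ (f : R⸨X⸩) (n : ℤ), (U f).coeff n = f.coeff (m * n)

theorem coeff_coe_natCast_mul (hm : m ≠ 0) (P : R⟦X⟧) (n : ℤ) :
    (P : R⸨X⸩).coeff (m * n) = if n < 0 then 0 else coeff (m * n.natAbs) P := by
  have hneg : (m : ℤ) * n < 0 ↔ n < 0 := by
    rw [← smul_eq_mul, smul_neg_iff_of_pos_left (by positivity)]
  simp only [coeff_coe, hneg, Int.natAbs_mul, Int.natAbs_natCast]

namespace IsDecimation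

theorem map_mul_of_dvd (hU : IsDecimation m U) (hm : m ≠ 0) (f : R⸨X⸩) {g : R⸨X⸩}
    (hg : ∀ i ∈ g.support, (m : ℤ) ∣ i) : U (f * g) = U f * U g := by
  ext n
  rw [hU, HahnSeries.coeff_mul, HahnSeries.coeff_mul]
  symm
  refine Finset.sum_nbij (fun ij ↦ (m * ij.1, m * ij.2)) ?_ ?_ ?_ ?_
  · rintro ⟨i, j⟩ hij
    simp only [Finset.mem_antidiagonal, HahnSeries.mem_support, hU f, hU g] at hij ⊢
    exact ⟨hij.1, hij.2.1, by rw [← mul_add, hij.2.2]⟩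
  · rintro ⟨i, j⟩ - ⟨k, l⟩ - h
    simpa [hm] using h
  · rintro ⟨i, j⟩ hij
    simp only [Finset.mem_coe, Finset.mem_antidiagonal] at hij
    obtain ⟨hi, hj, hsum⟩ := hij
    obtain ⟨l, rfl⟩ := hg j hj
    obtain rfl : i = m * (n - l) := by rw [mul_sub, ← hsum, add_sub_cancel_right]
    refine ⟨(n - l, l), ?_, rfl⟩
    simp only [Finset.mem_coe, Finset.mem_antidiagonal, HahnSeries.mem_support, hU f, hU g]
    exact ⟨hi, hj, sub_add_cancel n l⟩
  · rintro ⟨i, j⟩ -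
    rw [hU, hU]

theorem map_X_pow_mul_mk (hU : IsDecimation m U) {a c e : ℕ} (hc : m * c = a + e) (he : e < m)
    (t : ℕ → R) :
    U (X ^ a * PowerSeries.mk t : R⟦X⟧) =
      (X ^ c * PowerSeries.mk fun n ↦ t (m * n + e) : R⟦X⟧) := by
  ext n
  rw [hU, coeff_coe_natCast_mul (Nat.ne_zero_of_lt he), coeff_coe, coeff_X_pow_mul',
    coeff_X_pow_mul', coeff_mk, coeff_mk]
  generalize n.natAbs = k
  by_cases hk : c ≤ k
  · obtain ⟨j, rfl⟩ := Nat.exists_eq_add_of_le hk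
    have hsum : m * (c + j) = a + (m * j + e) := by rw [mul_add, hc]; ring
    rw [hsum, if_pos (Nat.le_add_right a _), if_pos hk, Nat.add_sub_cancel_left,
      Nat.add_sub_cancel_left]
  · have hlt : m * k < a := by
      have : m * (k + 1) ≤ m * c := Nat.mul_le_mul_left m (by omega)
      rw [mul_add_one] at this
      omega
    rw [if_neg hlt.not_ge, if_neg hk]

end IsDecimation

end Semiring

section CommRing

variable [CommRing R] {U : R⸨X⸩ → R⸨X⸩}

namespace IsDecimation

theorem map_expand (hU : IsDecimation m U) (hm : m ≠ 0) (P : R⟦X⟧) :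
    U (expand m hm P : R⟦X⟧) = P := by
  ext n
  rw [hU, coeff_coe_natCast_mul hm, coeff_expand_mul, coeff_coe]

theorem map_mul_expand (hU : IsDecimation m U) (hm : m ≠ 0) (f : R⸨X⸩) (P : R⟦X⟧) :
    U (f * (expand m hm P : R⟦X⟧)) = U f * P := by
  rw [hU.map_mul_of_dvd hm, hU.map_expand]
  intro i hi
  contrapose! hi
  rw [HahnSeries.mem_support, not_not, coeff_coe]
  split_ifs
  · rfl
  · exact coeff_expand_of_not_dvd m hm P (by rwa [← Int.natCast_dvd])

theorem map_mul_mul_expand (hU : IsDecimation m U) (hm : m ≠ 0) {A f : R⸨X⸩} {P D T : R⟦X⟧}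
    (hA : A * (expand m hm (expand m hm D) : R⟦X⟧) = (P * D : R⟦X⟧)) (hf : f * D = T) :
    U (A * f) * (expand m hm D : R⟦X⟧) = U (P * T : R⟦X⟧) := by
  rw [← hU.map_mul_expand hm, mul_right_comm, hA, map_mul, map_mul, ← hf]
  congr 1
  ring

end IsDecimation

end CommRing

end Decimation

section Quotient

variable {R : Type*} [CommRing R]

theorem mul_coe_eq_coe_mul_of_cross_mul_eq [IsDomain R] {A : R⸨X⸩}
    {P D E F D' E' F' : R⟦X⟧} (hE : E ≠ 0) (hE' : E' ≠ 0) (hD : D * E = F) (hD' : D' * E' = F')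
    (hA : A * (E * F' : R⟦X⟧) = (P * F * E' : R⟦X⟧)) : A * D' = (P * D : R⟦X⟧) := by
  subst hD hD'
  have hEE' : ((E * E' : R⟦X⟧) : R⸨X⸩) ≠ 0 :=
    (map_ne_zero_iff _ HahnSeries.ofPowerSeries_injective).mpr (mul_ne_zero hE hE')
  refine mul_right_cancel₀ hEE' ?_
  simp only [map_mul] at hA ⊢
  linear_combination hA

theorem mul_coe_eq_of_mul_eq {f : R⸨X⸩} {D E F P S : R⟦X⟧}
    (hD : D * E = F) (hf : f * D = (P * S : R⟦X⟧)) : f * F = (P * E * S : R⟦X⟧) := by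
  rw [← hD, map_mul, ← mul_assoc, hf, ← map_mul, mul_right_comm]

end Quotient

section EulerProduct

theorem coeff_J_eq_coeff_prod {b n N : ℕ} (hb : b ≠ 0) (hN : n < N) :
    coeff n (J b) = coeff n (∏ k ∈ Finset.range N, (1 - (X : ℤ⟦X⟧) ^ (b * (k + 1)))) := by
  induction N, hN using Nat.le_induction with
  | base => exact coeff_mk n _
  | succ N hN ih =>
    have horder : (n : ℕ∞) < ((X : ℤ⟦X⟧) ^ (b * (N + 1))).order := by
      rw [order_X_pow, Nat.cast_lt]
      have := Nat.le_mul_of_pos_left (N + 1) (Nat.pos_of_ne_zero hb)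
      omega
    rw [Finset.prod_range_succ, coeff_mul_one_sub_of_lt_order n horder, ih]

theorem expand_J {m b : ℕ} (hm : m ≠ 0) (hb : b ≠ 0) : expand m hm (J b) = J (m * b) := by
  have expand_prod (N : ℕ) :
      expand m hm (∏ k ∈ Finset.range N, (1 - (X : ℤ⟦X⟧) ^ (b * (k + 1)))) =
        ∏ k ∈ Finset.range N, (1 - (X : ℤ⟦X⟧) ^ (m * b * (k + 1))) := by
    simp only [map_prod, map_sub, map_one, map_pow, expand_X, ← pow_mul, mul_assoc]
  ext n
  rw [coeff_J_eq_coeff_prod (mul_ne_zero hm hb) n.lt_succ_self, ← expand_prod]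
  by_cases hn : m ∣ n
  · obtain ⟨k, rfl⟩ := hn
    have hk : k ≤ m * k := Nat.le_mul_of_pos_left k (Nat.pos_of_ne_zero hm)
    rw [coeff_expand_mul, coeff_expand_mul, coeff_J_eq_coeff_prod hb (Nat.lt_succ_of_le hk)]
  · rw [coeff_expand_of_not_dvd m hm _ hn, coeff_expand_of_not_dvd m hm _ hn]

theorem J_ne_zero {b : ℕ} (hb : b ≠ 0) : J b ≠ 0 := by
  intro h
  have hcoeff : coeff 0 (J b) = 1 := by simp [J, hb]
  simp [h] at hcoeff

end EulerProduct

section Offset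

theorem seven_pow_two_mul_mod_four (β : ℕ) : 7 ^ (2 * β) % 4 = 1 := by
  rw [pow_mul, Nat.pow_mod]
  norm_num

theorem lam_two_mul_add_one (β : ℕ) : lam (2 * β + 1) = 7 ^ (2 * β) + lam (2 * β) := by
  have hmod := seven_pow_two_mul_mod_four β
  rw [lam, lam, if_pos (by omega), if_neg (by omega), pow_succ]
  omega

theorem lam_two_mul_add_two (β : ℕ) :
    lam (2 * β + 2) = 7 ^ (2 * β + 1) * 5 + lam (2 * β + 1) := by
  have hmod := seven_pow_two_mul_mod_four β
  rw [lam, lam, if_neg (by omega), if_pos (by omega), pow_succ, pow_succ]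
  omega

end Offset

section Tower

variable {R : Type*} [CommRing R] {U : R⸨X⸩ → R⸨X⸩}

/-- The series `∑_{n ≥ 0} d(7^β·n + λ_β) qⁿ`, in terms of which every level `β ≥ 1` of the tower is
expressed. -/
def progressionSeries (d : ℕ → R) (β : ℕ) : R⟦X⟧ :=
  PowerSeries.mk fun n ↦ d (7 ^ β * n + lam β)

theorem IsDecimation.map_X_pow_twelve_mul_mk (hU : IsDecimation 7 U) (d : ℕ → R) :
    U (X ^ 12 * PowerSeries.mk d : R⟦X⟧) = (X ^ 2 * progressionSeries d 1 : R⟦X⟧) :=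
  hU.map_X_pow_mul_mk (e := 2) rfl (by norm_num) d

theorem IsDecimation.map_X_sq_mul_progressionSeries_odd (hU : IsDecimation 7 U) (d : ℕ → R)
    (β : ℕ) :
    U (X ^ 2 * progressionSeries d (2 * β + 1) : R⟦X⟧) =
      (X * progressionSeries d (2 * β + 2) : R⟦X⟧) := by
  have hindex (n : ℕ) : 7 ^ (2 * β + 1) * (7 * n + 5) + lam (2 * β + 1) =
      7 ^ (2 * β + 2) * n + lam (2 * β + 2) := by
    rw [lam_two_mul_add_two]
    ring
  simpa only [progressionSeries, hindex, pow_one] using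
    hU.map_X_pow_mul_mk (a := 2) (c := 1) (e := 5) rfl (by norm_num)
      fun n ↦ d (7 ^ (2 * β + 1) * n + lam (2 * β + 1))

theorem IsDecimation.map_X_pow_thirteen_mul_progressionSeries_even (hU : IsDecimation 7 U)
    (d : ℕ → R) (β : ℕ) :
    U (X ^ 13 * progressionSeries d (2 * β) : R⟦X⟧) =
      (X ^ 2 * progressionSeries d (2 * β + 1) : R⟦X⟧) := by
  have hindex (n : ℕ) : 7 ^ (2 * β) * (7 * n + 1) + lam (2 * β) =
      7 ^ (2 * β + 1) * n + lam (2 * β + 1) := by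
    rw [lam_two_mul_add_one]
    ring
  simpa only [progressionSeries, hindex] using
    hU.map_X_pow_mul_mk (a := 13) (c := 2) (e := 1) rfl (by norm_num)
      fun n ↦ d (7 ^ (2 * β) * n + lam (2 * β))

variable {d : ℕ → R} {A : R⸨X⸩} {L : ℕ → R⸨X⸩}

theorem tower_even_mul_mk_of_odd (hU : IsDecimation 7 U)
    (hLeven : ∀ β, L (2 * β + 2) = U (L (2 * β + 1))) {β : ℕ}
    (hodd : L (2 * β + 1) * (expand 7 (by norm_num) (PowerSeries.mk d) : R⟦X⟧) =
      (X ^ 2 * progressionSeries d (2 * β + 1) : R⟦X⟧)) :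
    L (2 * β + 2) * (PowerSeries.mk d : R⟦X⟧) =
      (X * progressionSeries d (2 * β + 2) : R⟦X⟧) := by
  rw [hLeven, ← hU.map_mul_expand (by norm_num), hodd, hU.map_X_sq_mul_progressionSeries_odd]

theorem tower_odd_mul_expand_mk (hU : IsDecimation 7 U)
    (hA : A * (expand 7 (by norm_num) (expand 7 (by norm_num) (PowerSeries.mk d)) : R⟦X⟧) =
      (X ^ 12 * PowerSeries.mk d : R⟦X⟧))
    (hL0 : L 0 = 1) (hLodd : ∀ β, L (2 * β + 1) = U (A * L (2 * β)))
    (hLeven : ∀ β, L (2 * β + 2) = U (L (2 * β + 1))) (β : ℕ) :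
    L (2 * β + 1) * (expand 7 (by norm_num) (PowerSeries.mk d) : R⟦X⟧) =
      (X ^ 2 * progressionSeries d (2 * β + 1) : R⟦X⟧) := by
  induction β with
  | zero =>
    have hbase : L (2 * 0) * (PowerSeries.mk d : R⟦X⟧) = (PowerSeries.mk d : R⟦X⟧) := by
      rw [mul_zero, hL0, one_mul]
    rw [hLodd, hU.map_mul_mul_expand _ hA hbase, hU.map_X_pow_twelve_mul_mk]
  | succ β ih =>
    have heven : L (2 * (β + 1)) * (PowerSeries.mk d : R⟦X⟧) =
        (X * progressionSeries d (2 * (β + 1)) : R⟦X⟧) :=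
      tower_even_mul_mk_of_odd hU hLeven ih
    rw [hLodd, hU.map_mul_mul_expand _ hA heven, ← mul_assoc, ← pow_succ,
      hU.map_X_pow_thirteen_mul_progressionSeries_even]

end Tower

/-- in the d₅ tower (`A₅ = q^{12}·J_2^5·J_49^{16}/(J_1^{16}·J_98^5)`,
`L_0 = 1`, `L_{2β+1} = U_7(A₅·L_{2β})`, `L_{2β+2} = U_7(L_{2β+1})`), for every `α ≥ 1`:
`L_{2α−1} = q^2·(J_7^{16}/J_14^5)·∑_{n≥0} d_5(7^{2α−1}·n + λ_{2α−1})·qⁿ` and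
`L_{2α} = q·(J_1^{16}/J_2^5)·∑_{n≥0} d_5(7^{2α}·n + λ_{2α})·qⁿ`; stated multiplied
through by the invertible series `J_14^5` resp. `J_2^5`. -/
theorem stmt13
    (d5 : ℕ → ℤ) (hd : PowerSeries.mk d5 * (J 1) ^ 16 = (J 2) ^ 5)
    (U : LaurentSeries ℤ → LaurentSeries ℤ)
    (hU : ∀ (f : LaurentSeries ℤ) (n : ℤ), (U f).coeff n = f.coeff (7 * n))
    (A5 : LaurentSeries ℤ)
    (hA5 : A5 * HahnSeries.ofPowerSeries ℤ ℤ ((J 1) ^ 16 * (J 98) ^ 5)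
        = HahnSeries.ofPowerSeries ℤ ℤ (PowerSeries.X ^ 12 * (J 2) ^ 5 * (J 49) ^ 16))
    (L : ℕ → LaurentSeries ℤ) (hL0 : L 0 = 1)
    (hLodd : ∀ β : ℕ, L (2 * β + 1) = U (A5 * L (2 * β)))
    (hLeven : ∀ β : ℕ, L (2 * β + 2) = U (L (2 * β + 1)))
    (α : ℕ) (hα : 1 ≤ α) :
    L (2 * α - 1) * HahnSeries.ofPowerSeries ℤ ℤ ((J 14) ^ 5)
      = HahnSeries.ofPowerSeries ℤ ℤ
          (PowerSeries.X ^ 2 * (J 7) ^ 16 *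
            PowerSeries.mk fun n => d5 (7 ^ (2 * α - 1) * n + lam (2 * α - 1)))
    ∧
    L (2 * α) * HahnSeries.ofPowerSeries ℤ ℤ ((J 2) ^ 5)
      = HahnSeries.ofPowerSeries ℤ ℤ
          (PowerSeries.X * (J 1) ^ 16 *
            PowerSeries.mk fun n => d5 (7 ^ (2 * α) * n + lam (2 * α))) := by
  have hD7 : expand 7 (by norm_num) (PowerSeries.mk d5) * J 7 ^ 16 = J 14 ^ 5 := by
    simpa [expand_J] using congrArg (expand 7 (by norm_num)) hd
  have hD49 : expand 7 (by norm_num) (expand 7 (by norm_num) (PowerSeries.mk d5)) * J 49 ^ 16 =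
      J 98 ^ 5 := by
    simpa [expand_J] using congrArg (expand 7 (by norm_num)) hD7
  have hJ (b : ℕ) (hb : b ≠ 0) : J b ^ 16 ≠ 0 := pow_ne_zero 16 (J_ne_zero hb)
  have hA : A5 * (expand 7 (by norm_num) (expand 7 (by norm_num) (PowerSeries.mk d5)) : ℤ⟦X⟧) =
      (X ^ 12 * PowerSeries.mk d5 : ℤ⟦X⟧) :=
    mul_coe_eq_coe_mul_of_cross_mul_eq (hJ 1 (by norm_num)) (hJ 49 (by norm_num)) hd hD49 hA5
  obtain ⟨β, rfl⟩ := Nat.exists_eq_add_of_le' hα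
  have hodd := tower_odd_mul_expand_mk hU hA hL0 hLodd hLeven β
  have heven := tower_even_mul_mk_of_odd hU hLeven hodd
  exact ⟨mul_coe_eq_of_mul_eq hD7 hodd, mul_coe_eq_of_mul_eq hd heven⟩
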